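/- Let R be an associative ring with 1, J a two-sided ideal of R, and k ≥ 1. Let λ'_1,…,λ'_n and α'_1,…,α'_n be units of R with (λ'_i : R) - 1 ∈ J^k and (α'_i : R) - 1 ∈ J for all i. Let N be the normal closure in Rˣ of the set of commutators {λ'_i⁻¹ α'_i⁻¹ λ'_i α'_i : i = 1,…,n}. Then every u ∈ N satisfies: (i) (u : R) - 1 ∈ J^(k+1); (ii) for each i, (u⁻¹ α'_i u : R) - (α'_i : R) ∈ J^(k+2); and (iii) for each i, (u λ'_i u⁻¹ : R) - (λ'_i : R) ∈ J^(2k+1). -/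

import Mathlib

open Pointwise

/-!
For a two-sided ideal `I`, let `U m` be the group of units congruent to `1` modulo `I ^ m`; it is
normal in `Rˣ`. The identity `u * v - v * u = (u - 1) * (v - 1) - (v - 1) * (u - 1)` gives
`⁅U p, U q⁆ ≤ U (p + q)`. If `lam i ∈ U p` and `alf i ∈ U q`, the normal closure of the commutators
is therefore contained in `U (p + q)`. Commuting `u ∈ U (p + q)` once more with `alf i` and with
`lam i` yields the last two estimates, because `u * v * u⁻¹` and `v` are congruent modulo an ideal
exactly when `⁅u, v⁆` is congruent to `1`.
-/

section CongruenceUnits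

open scoped commutatorElement

variable {R : Type*} [Ring R]

/-- The congruence subgroup of level `I`: the units of `R` that are congruent to `1` modulo the
two-sided ideal `I`. As the kernel of reduction modulo `I` it is normal in `Rˣ`. -/
def congruenceUnits (I : Ideal R) [I.IsTwoSided] : Subgroup Rˣ :=
  (Units.map (Ideal.Quotient.mk I : R →* R ⧸ I)).ker

instance congruenceUnits_normal (I : Ideal R) [I.IsTwoSided] : (congruenceUnits I).Normal :=
  MonoidHom.normal_ker _

theorem mem_congruenceUnits {I : Ideal R} [I.IsTwoSided] {u : Rˣ} :
    u ∈ congruenceUnits I ↔ (u : R) - 1 ∈ I := by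
  rw [congruenceUnits, MonoidHom.mem_ker, Units.ext_iff, ← Ideal.Quotient.eq]
  rfl

theorem commutatorElement_mem_congruenceUnits_iff_mul_sub_mul_mem {I : Ideal R} [I.IsTwoSided]
    {u v : Rˣ} :
    ⁅u, v⁆ ∈ congruenceUnits I ↔ (u * v - v * u : R) ∈ I := by
  rw [congruenceUnits, MonoidHom.mem_ker, map_commutatorElement,
    commutatorElement_eq_one_iff_mul_comm, ← Ideal.Quotient.eq, Units.ext_iff]
  simp

theorem commutatorElement_mem_congruenceUnits_iff_conj_sub_mem {I : Ideal R} [I.IsTwoSided]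
    {u v : Rˣ} :
    ⁅u, v⁆ ∈ congruenceUnits I ↔ ((u * v * u⁻¹ : Rˣ) : R) - v ∈ I := by
  rw [congruenceUnits, MonoidHom.mem_ker, map_commutatorElement, commutatorElement_def,
    mul_inv_eq_one, ← Ideal.Quotient.eq, Units.ext_iff]
  simp

theorem commutator_congruenceUnits_le {I K L : Ideal R} [I.IsTwoSided] [K.IsTwoSided]
    [L.IsTwoSided] (hIK : I * K ≤ L) (hKI : K * I ≤ L) :
    ⁅congruenceUnits I, congruenceUnits K⁆ ≤ congruenceUnits L := by
  refine Subgroup.commutator_le.2 fun u hu v hv ↦ ?_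
  rw [mem_congruenceUnits] at hu hv
  have expand : (u * v - v * u : R) = (u - 1) * (v - 1) - (v - 1) * (u - 1) := by noncomm_ring
  rw [commutatorElement_mem_congruenceUnits_iff_mul_sub_mul_mem, expand]
  exact sub_mem (hIK (Ideal.mul_mem_mul hu hv)) (hKI (Ideal.mul_mem_mul hv hu))

theorem commutator_congruenceUnits_pow_le (I : Ideal R) [I.IsTwoSided] (p q : ℕ) :
    ⁅congruenceUnits (I ^ p), congruenceUnits (I ^ q)⁆ ≤ congruenceUnits (I ^ (p + q)) :=
  commutator_congruenceUnits_le (Ideal.IsTwoSided.pow_add p q).ge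
    (add_comm p q ▸ (Ideal.IsTwoSided.pow_add q p).ge)

theorem conj_sub_mem_pow_add {I : Ideal R} [I.IsTwoSided] {p q : ℕ} {u v : Rˣ}
    (hu : u ∈ congruenceUnits (I ^ p)) (hv : v ∈ congruenceUnits (I ^ q)) :
    ((u * v * u⁻¹ : Rˣ) : R) - v ∈ I ^ (p + q) :=
  commutatorElement_mem_congruenceUnits_iff_conj_sub_mem.1 <|
    commutator_congruenceUnits_pow_le I p q (Subgroup.commutator_mem_commutator hu hv)

-- At exponent `0` the two powers differ: `J.toAddSubmonoid ^ 0` is the set of natural multiples of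
-- `1`, whereas `I ^ 0 = ⊤`.
theorem exists_isTwoSided_forall_mem_pow_iff (J : AddSubgroup R)
    (hJl : ∀ r : R, ∀ x ∈ J, r * x ∈ J) (hJr : ∀ r : R, ∀ x ∈ J, x * r ∈ J) :
    ∃ I : Ideal R, I.IsTwoSided ∧ ∀ m ≠ 0, ∀ x, x ∈ J.toAddSubmonoid ^ m ↔ x ∈ I ^ m := by
  let I : Ideal R := { J with smul_mem' := fun r _ hx ↦ hJl r _ hx }
  refine ⟨I, ⟨fun r hx ↦ hJr r _ hx⟩, fun m hm x ↦ ?_⟩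
  exact SetLike.ext_iff.1 (Submodule.pow_toAddSubmonoid I hm).symm x

theorem normalClosure_of_commutators_estimates_general (I : Ideal R) [I.IsTwoSided] (p q : ℕ)
    {ι : Type*} (lam alf : ι → Rˣ) (hlam : ∀ i, (lam i : R) - 1 ∈ I ^ p)
    (half : ∀ i, (alf i : R) - 1 ∈ I ^ q) :
    ∀ u ∈ Subgroup.normalClosure {x : Rˣ | ∃ i, x = (lam i)⁻¹ * (alf i)⁻¹ * lam i * alf i},
      (u : R) - 1 ∈ I ^ (p + q) ∧
      (∀ i, ((u⁻¹ * alf i * u : Rˣ) : R) - alf i ∈ I ^ (p + 2 * q)) ∧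
      (∀ i, ((u * lam i * u⁻¹ : Rˣ) : R) - lam i ∈ I ^ (2 * p + q)) := by
  simp only [← mem_congruenceUnits] at hlam half ⊢
  intro u hu
  have u_mem : u ∈ congruenceUnits (I ^ (p + q)) := by
    refine Subgroup.normalClosure_le_normal ?_ hu
    rintro _ ⟨i, rfl⟩
    simpa [commutatorElement_def] using commutator_congruenceUnits_pow_le I p q <|
      Subgroup.commutator_mem_commutator (inv_mem (hlam i)) (inv_mem (half i))
  refine ⟨u_mem, fun i ↦ ?_, fun i ↦ ?_⟩
  · rw [show p + 2 * q = p + q + q by ring]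
    simpa using conj_sub_mem_pow_add (inv_mem u_mem) (half i)
  · rw [show 2 * p + q = p + q + p by ring]
    exact conj_sub_mem_pow_add u_mem (hlam i)

end CongruenceUnits

/-- Ring-theoretic core of Lemma 2.2: let `J` be a two-sided ideal of a ring `R`, `k ≥ 1`,
and let `λ'_1, …, λ'_n` and `α'_1, …, α'_n` be units with `λ'_i - 1 ∈ J^k` and
`α'_i - 1 ∈ J`. If `N` is the normal closure in `Rˣ` of the commutators
`λ'_i⁻¹ α'_i⁻¹ λ'_i α'_i`, then every `u ∈ N` satisfies
(i) `u - 1 ∈ J^(k+1)`, (ii) `u⁻¹ α'_i u - α'_i ∈ J^(k+2)`, and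
(iii) `u λ'_i u⁻¹ - λ'_i ∈ J^(2k+1)`. -/
theorem normalClosure_of_commutators_estimates
    (R : Type*) [Ring R] (J : AddSubgroup R)
    (hJl : ∀ r : R, ∀ x ∈ J, r * x ∈ J) (hJr : ∀ r : R, ∀ x ∈ J, x * r ∈ J)
    (k : ℕ) (hk : 1 ≤ k) (n : ℕ) (lam alf : Fin n → Rˣ)
    (hlam : ∀ i, ((lam i : Rˣ) : R) - 1 ∈ J.toAddSubmonoid ^ k)
    (half : ∀ i, ((alf i : Rˣ) : R) - 1 ∈ J) :
    ∀ u ∈ Subgroup.normalClosure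
        {x : Rˣ | ∃ i : Fin n, x = (lam i)⁻¹ * (alf i)⁻¹ * lam i * alf i},
      (((u : Rˣ) : R) - 1 ∈ J.toAddSubmonoid ^ (k + 1)) ∧
      (∀ i : Fin n, ((u⁻¹ * alf i * u : Rˣ) : R) - ((alf i : Rˣ) : R)
          ∈ J.toAddSubmonoid ^ (k + 2)) ∧
      (∀ i : Fin n, ((u * lam i * u⁻¹ : Rˣ) : R) - ((lam i : Rˣ) : R)
          ∈ J.toAddSubmonoid ^ (2 * k + 1)) := by
  obtain ⟨I, _, mem_pow⟩ := exists_isTwoSided_forall_mem_pow_iff J hJl hJr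
  simpa [mem_pow] using normalClosure_of_commutators_estimates_general I k 1 lam alf
    (by simpa [mem_pow k (by lia)] using hlam) (by simpa [← mem_pow 1 one_ne_zero] using half)
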